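/- Let W be a discrete memoryless channel with R_cr < C, and suppose Q ∈ P(𝒳) and R > 0 are such that the pair (Q,W) is singular and R_cr(Q) < R < I(Q;W). Then there exists a constant K̃₁ > 0, depending only on W, R and Q, such that for every positive integer N there exists an (N,R) code (f,φ) whose maximal error probability satisfies P_e(f,φ) ≤ (K̃₁/√N) · e^{−N·E_r(R,Q)}. -/

import Mathlib

open Real BigOperators
open scoped Classical

namespace RCB

/-- A probability distribution on a finite alphabet. -/
def IsDist {α : Type*} [Fintype α] (Q : α → ℝ) : Prop :=
  (∀ a, 0 ≤ Q a) ∧ ∑ a, Q a = 1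

/-- A discrete memoryless channel, i.e. a stochastic matrix from `X` to `Y`. -/
def IsChannel {X Y : Type*} [Fintype X] [Fintype Y] (W : X → Y → ℝ) : Prop :=
  (∀ x y, 0 ≤ W x y) ∧ ∀ x, ∑ y, W x y = 1

/-- The Gallager function `E_o(ρ, Q)`. -/
noncomputable def Eo {X Y : Type*} [Fintype X] [Fintype Y]
    (W : X → Y → ℝ) (ρ : ℝ) (Q : X → ℝ) : ℝ :=
  - Real.log (∑ y, (∑ x, Q x * W x y ^ (1 / (1 + ρ))) ^ (1 + ρ))

/-- The random coding exponent `E_r(R, Q)` for input distribution `Q`. -/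
noncomputable def ErQ {X Y : Type*} [Fintype X] [Fintype Y]
    (W : X → Y → ℝ) (R : ℝ) (Q : X → ℝ) : ℝ :=
  sSup ((fun ρ => -ρ * R + Eo W ρ Q) '' Set.Icc (0 : ℝ) 1)

/-- The random coding exponent `E_r(R)`. -/
noncomputable def Er {X Y : Type*} [Fintype X] [Fintype Y]
    (W : X → Y → ℝ) (R : ℝ) : ℝ :=
  sSup {v : ℝ | ∃ Q : X → ℝ, IsDist Q ∧ v = ErQ W R Q}

/-- The mutual information `I(Q; W)` (natural logarithm). -/
noncomputable def MI {X Y : Type*} [Fintype X] [Fintype Y]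
    (W : X → Y → ℝ) (Q : X → ℝ) : ℝ :=
  ∑ x, ∑ y, Q x * W x y * Real.log (W x y / ∑ x', Q x' * W x' y)

/-- The capacity `C = max_Q I(Q;W)`. -/
noncomputable def Capacity {X Y : Type*} [Fintype X] [Fintype Y]
    (W : X → Y → ℝ) : ℝ :=
  sSup {v : ℝ | ∃ Q : X → ℝ, IsDist Q ∧ v = MI W Q}

/-- The critical rate of the input distribution `Q`:
`R_cr(Q) = ∂E_o(ρ,Q)/∂ρ |_{ρ=1}`. -/
noncomputable def RcrQ {X Y : Type*} [Fintype X] [Fintype Y]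
    (W : X → Y → ℝ) (Q : X → ℝ) : ℝ :=
  deriv (fun ρ => Eo W ρ Q) 1

/-- The critical rate of the channel: the largest `R` with
`E_r(R) = -R + max_Q E_o(1,Q)`. -/
noncomputable def Rcr {X Y : Type*} [Fintype X] [Fintype Y]
    (W : X → Y → ℝ) : ℝ :=
  sSup {R : ℝ | Er W R = -R + sSup {v : ℝ | ∃ Q : X → ℝ, IsDist Q ∧ v = Eo W 1 Q}}

/-- The rate `R_∞ = inf {R ≥ 0 : E_SP(R) < ∞}` (finiteness of the
sphere-packing exponent expressed as boundedness of the family of affine maps). -/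
noncomputable def Rinf {X Y : Type*} [Fintype X] [Fintype Y]
    (W : X → Y → ℝ) : ℝ :=
  sInf {R : ℝ | 0 ≤ R ∧
    BddAbove {v : ℝ | ∃ (Q : X → ℝ) (ρ : ℝ), IsDist Q ∧ 0 ≤ ρ ∧ v = -ρ * R + Eo W ρ Q}}

/-- The pair `(Q, W)` is singular if `W(y|x) = W(y|z)` whenever
`Q(x)W(y|x)Q(z)W(y|z) > 0`. -/
def Singular {X Y : Type*} (W : X → Y → ℝ) (Q : X → ℝ) : Prop :=
  ∀ x y z, 0 < Q x * W x y * (Q z * W z y) → W x y = W z y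

/-- `ρ^*_R(Q) = -∂E_r(a,Q)/∂a |_{a=R}`. -/
noncomputable def rhoStarQ {X Y : Type*} [Fintype X] [Fintype Y]
    (W : X → Y → ℝ) (Q : X → ℝ) (R : ℝ) : ℝ :=
  - deriv (fun a => ErQ W a Q) R

/-- The number of messages of an `(N, R)` code: `⌈exp (N R)⌉`. -/
noncomputable def nMsgs (N : ℕ) (R : ℝ) : ℕ := ⌈Real.exp (N * R)⌉₊

/-- The `N`-fold memoryless extension of the channel `W`. -/
noncomputable def Wn {X Y : Type*} (W : X → Y → ℝ) {N : ℕ}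
    (c : Fin N → X) (y : Fin N → Y) : ℝ :=
  ∏ n, W (c n) (y n)

/-- The maximal error probability of the code `(f, φ)` over the `N`-fold
memoryless extension of `W`. -/
noncomputable def Pmax {X Y : Type*} [Fintype X] [Fintype Y] {M N : ℕ}
    (W : X → Y → ℝ) (f : Fin M → Fin N → X) (φ : (Fin N → Y) → Fin M) : ℝ :=
  ⨆ m : Fin M, ∑ y : Fin N → Y, Wn W (f m) y * (if φ y ≠ m then (1 : ℝ) else 0)

/-- The ensemble average error probability `P̄_e(Q, N, R)`: the `⌈exp (N R)⌉`
codewords are drawn i.i.d. from `Q^N` and decoded by maximum-likelihood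
decoding, ties counted as errors. -/
noncomputable def Pbar {X Y : Type*} [Fintype X] [Fintype Y]
    (W : X → Y → ℝ) (Q : X → ℝ) (N : ℕ) (R : ℝ) : ℝ :=
  ∑ c : Fin (nMsgs N R) → Fin N → X,
    (∏ m, ∏ n, Q (c m n)) *
      ((nMsgs N R : ℝ)⁻¹ *
        ∑ m, ∑ y : Fin N → Y,
          Wn W (c m) y *
            (if ∃ m', m' ≠ m ∧ Wn W (c m) y ≤ Wn W (c m') y then (1 : ℝ) else 0))

/-- The tilted output distribution `f_ρ`. -/
noncomputable def fRho {X Y : Type*} [Fintype X] [Fintype Y]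
    (W : X → Y → ℝ) (Q : X → ℝ) (ρ : ℝ) (y : Y) : ℝ :=
  (∑ x, Q x * W x y ^ (1 / (1 + ρ))) ^ (1 + ρ) /
    ∑ b, (∑ a, Q a * W a b ^ (1 / (1 + ρ))) ^ (1 + ρ)

/-- The cumulant generating function
`Λ_ρ(λ) = log E_{P_{X,Y}}[exp(λ log (f_ρ(Y)/W(Y|X)))]` with `P_{X,Y} = Q × W`. -/
noncomputable def Lam {X Y : Type*} [Fintype X] [Fintype Y]
    (W : X → Y → ℝ) (Q : X → ℝ) (ρ : ℝ) (t : ℝ) : ℝ :=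
  Real.log (∑ x, ∑ y, Q x * W x y * Real.exp (t * Real.log (fRho W Q ρ y / W x y)))

/-- `P_{X,Y,Z}(S̃_Q)` where `P_{X,Y,Z}(x,y,z) = Q(x)W(y|x)Q(z)` and
`S̃_Q = {(x,y,z) : Q(x)W(y|x)Q(z)W(y|z) > 0}`. -/
noncomputable def PStilde {X Y : Type*} [Fintype X] [Fintype Y]
    (W : X → Y → ℝ) (Q : X → ℝ) : ℝ :=
  ∑ x, ∑ y, ∑ z,
    if 0 < Q x * W x y * (Q z * W z y) then Q x * W x y * Q z else 0

/-- The bivariate cumulant generating function `Λ_{1,ρ}(v)` with respect to the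
conditional distribution `P̃_{X,Y,Z}` of `P_{X,Y,Z}` given `S̃_Q`. -/
noncomputable def Lam1 {X Y : Type*} [Fintype X] [Fintype Y]
    (W : X → Y → ℝ) (Q : X → ℝ) (ρ : ℝ) (v : ℝ × ℝ) : ℝ :=
  Real.log ((∑ x, ∑ y, ∑ z,
    if 0 < Q x * W x y * (Q z * W z y) then
      Q x * W x y * Q z *
        Real.exp (v.1 * Real.log (W x y / fRho W Q ρ y) +
          v.2 * Real.log (W z y / W x y))
    else 0) / PStilde W Q)

/-- The subdifferential of `f : ℝ → ℝ` at `R` (for convex `f`). -/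
def Subderiv (f : ℝ → ℝ) (R : ℝ) : Set ℝ :=
  {g : ℝ | ∀ x, f R + g * (x - R) ≤ f x}

/-- The tilted backward channel `P^ρ_{X|Y}`. -/
noncomputable def PXgY {X Y : Type*} [Fintype X]
    (W : X → Y → ℝ) (Q : X → ℝ) (ρ : ℝ) (x : X) (y : Y) : ℝ :=
  Q x * W x y ^ (1 / (1 + ρ)) / ∑ a, Q a * W a y ^ (1 / (1 + ρ))

/-- The tilted joint distribution `P^ρ_{X,Y}(x,y) = P^ρ_{X|Y}(x|y) P^ρ_Y(y)`. -/
noncomputable def PXY {X Y : Type*} [Fintype X] [Fintype Y]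
    (W : X → Y → ℝ) (Q : X → ℝ) (ρ : ℝ) (x : X) (y : Y) : ℝ :=
  PXgY W Q ρ x y * fRho W Q ρ y

theorem centralBinom_sq_mul_le (n : ℕ) : n.centralBinom ^ 2 * (2 * n + 1) ≤ 4 ^ (2 * n) := by
  induction n with
  | zero => simp
  | succ n ih =>
    have h := Nat.succ_mul_centralBinom_succ n
    have h2 : (n + 1) ^ 2 * ((n + 1).centralBinom ^ 2 * (2 * (n + 1) + 1))
        ≤ (n + 1) ^ 2 * 4 ^ (2 * (n + 1)) := by
      calc (n + 1) ^ 2 * ((n + 1).centralBinom ^ 2 * (2 * (n + 1) + 1))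
          = ((n + 1) * (n + 1).centralBinom) ^ 2 * (2 * n + 3) := by ring
        _ = (n.centralBinom ^ 2 * (2 * n + 1)) * (4 * (2 * n + 1) * (2 * n + 3)) := by
            rw [h]; ring
        _ ≤ 4 ^ (2 * n) * (4 * (2 * n + 1) * (2 * n + 3)) := Nat.mul_le_mul_right _ ih
        _ ≤ 4 ^ (2 * n) * (16 * (n + 1) ^ 2) := Nat.mul_le_mul_left _ (by nlinarith)
        _ = (n + 1) ^ 2 * 4 ^ (2 * (n + 1)) := by ring
    exact Nat.le_of_mul_le_mul_left h2 (by positivity)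

theorem choose_half_sq_mul_le (k : ℕ) : (k.choose (k / 2)) ^ 2 * (k + 1) ≤ 4 ^ k := by
  rcases Nat.even_or_odd' k with ⟨m, rfl | rfl⟩
  · have := centralBinom_sq_mul_le m
    rw [Nat.centralBinom_eq_two_mul_choose] at this
    simpa using this
  · have h := centralBinom_sq_mul_le (m + 1)
    have h1 : (m + 1).centralBinom = 2 * (2 * m + 1).choose m := by
      rw [Nat.centralBinom_eq_two_mul_choose, show 2 * (m + 1) = 2 * m + 1 + 1 by ring,
        Nat.choose_succ_succ, Nat.choose_symm_half]
      ring
    have h2 : (2 * m + 1) / 2 = m := by omega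
    rw [h1, show 2 * (m + 1) = (2 * m + 1) + 1 by ring, pow_succ 4] at h
    rw [h2]
    nlinarith [sq_nonneg ((2 * m + 1).choose m)]

theorem choose_half_le (k : ℕ) : (k.choose (k / 2) : ℝ) ≤ 2 ^ k / √(k + 1) := by
  rw [le_div_iff₀ (by positivity)]
  refine le_of_sq_le_sq ?_ (by positivity)
  have h : ((k.choose (k / 2) : ℝ)) ^ 2 * (k + 1) ≤ 4 ^ k := by
    exact_mod_cast choose_half_sq_mul_le k
  rw [mul_pow, Real.sq_sqrt (by positivity), ← pow_mul, mul_comm k 2, pow_mul]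
  norm_num
  exact h

/-- Translation of a real function by `s`, as a linear operator. -/
def shiftOp (s : ℝ) : Module.End ℝ (ℝ → ℝ) where
  toFun F u := F (u + s)
  map_add' _ _ := rfl
  map_smul' _ _ := rfl

theorem shiftOp_apply (s : ℝ) (F : ℝ → ℝ) (u : ℝ) : shiftOp s F u = F (u + s) := rfl

theorem shiftOp_commute (s t : ℝ) : Commute (shiftOp s) (shiftOp t) := by
  refine LinearMap.ext fun F => funext fun u => ?_
  simp only [Module.End.mul_apply, shiftOp_apply]
  congr 1
  ring

theorem shiftOp_pow_apply (s : ℝ) (n : ℕ) (F : ℝ → ℝ) (u : ℝ) :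
    (shiftOp s ^ n) F u = F (u + n * s) := by
  induction n generalizing u with
  | zero => simp
  | succ n ih =>
    rw [pow_succ', Module.End.mul_apply, shiftOp_apply, ih]
    congr 1
    push_cast
    ring

/-- The weighted average of the translations by `T y`, as a linear operator. -/
noncomputable def avgOp {Y : Type*} [Fintype Y] (T w : Y → ℝ) : Module.End ℝ (ℝ → ℝ) :=
  ∑ y, w y • shiftOp (T y)

section avgOp
variable {Y : Type*} [Fintype Y] (T : Y → ℝ)

theorem avgOp_apply (w : Y → ℝ) (F : ℝ → ℝ) (u : ℝ) :
    avgOp T w F u = ∑ y, w y * F (u + T y) := by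
  simp [avgOp, LinearMap.sum_apply, Finset.sum_apply, shiftOp_apply]

theorem avgOp_add (v w : Y → ℝ) : avgOp T (v + w) = avgOp T v + avgOp T w := by
  simp [avgOp, add_smul, Finset.sum_add_distrib]

theorem avgOp_commute_shiftOp (w : Y → ℝ) (s : ℝ) : Commute (avgOp T w) (shiftOp s) :=
  Commute.sum_left _ _ _ fun _ _ => (shiftOp_commute _ _).smul_left _

theorem avgOp_pow_apply (w : Y → ℝ) (n : ℕ) (F : ℝ → ℝ) (u : ℝ) :
    (avgOp T w ^ n) F u = ∑ y : Fin n → Y, (∏ i, w (y i)) * F (u + ∑ i, T (y i)) := by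
  induction n generalizing u with
  | zero => simp
  | succ n ih =>
    rw [pow_succ', Module.End.mul_apply, avgOp_apply, ← (Fin.consEquiv fun _ => Y).sum_comp,
      Fintype.sum_prod_type]
    refine Finset.sum_congr rfl fun y _ => ?_
    rw [ih, Finset.mul_sum]
    refine Finset.sum_congr rfl fun z _ => ?_
    simp [Fin.consEquiv, Fin.prod_univ_succ, Fin.sum_univ_succ, mul_assoc, add_assoc]

theorem avgOp_pow_le {w : Y → ℝ} (hw : ∀ y, 0 ≤ w y) (n : ℕ) {F : ℝ → ℝ} {C : ℝ}
    (hF : ∀ u, F u ≤ C) (u : ℝ) : (avgOp T w ^ n) F u ≤ (∑ y, w y) ^ n * C := by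
  induction n generalizing u with
  | zero => simpa using hF u
  | succ n ih =>
    rw [pow_succ', Module.End.mul_apply, avgOp_apply, pow_succ', mul_assoc, Finset.sum_mul]
    exact Finset.sum_le_sum fun y _ => mul_le_mul_of_nonneg_left (ih _) (hw y)

end avgOp

theorem coin_pow_le {a b G : ℝ} {F : ℝ → ℝ} (hF0 : ∀ u, 0 ≤ F u)
    (hG : ∀ (c : ℝ) (k : ℕ), ∑ j ∈ Finset.range (k + 1), F (c + j * (b - a)) ≤ G)
    (k : ℕ) (u : ℝ) : ((shiftOp b + shiftOp a) ^ k) F u ≤ 2 ^ k * (G / √(k + 1)) := by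
  rw [(shiftOp_commute b a).add_pow, LinearMap.sum_apply, Finset.sum_apply]
  calc _ = ∑ j ∈ Finset.range (k + 1), (k.choose j : ℝ) * F ((u + k * a) + j * (b - a)) := by
        refine Finset.sum_congr rfl fun j hj => ?_
        have hj' : j ≤ k := by simpa [Nat.lt_succ_iff] using hj
        rw [← nsmul_eq_mul', LinearMap.smul_apply, Pi.smul_apply, nsmul_eq_mul,
          Module.End.mul_apply, shiftOp_pow_apply, shiftOp_pow_apply]
        congr 2
        push_cast [hj']
        ring
    _ ≤ ∑ j ∈ Finset.range (k + 1), (2 ^ k / √(k + 1)) * F ((u + k * a) + j * (b - a)) := by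
        refine Finset.sum_le_sum fun j _ => mul_le_mul_of_nonneg_right ?_ (hF0 _)
        exact le_trans (by exact_mod_cast Nat.choose_le_middle j k) (choose_half_le k)
    _ = (2 ^ k / √(k + 1)) * ∑ j ∈ Finset.range (k + 1), F ((u + k * a) + j * (b - a)) := by
        rw [Finset.mul_sum]
    _ ≤ (2 ^ k / √(k + 1)) * G := mul_le_mul_of_nonneg_left (hG _ _) (by positivity)
    _ = _ := by ring

theorem sum_choose_div_succ_le {θ : ℝ} (h0 : 0 < θ) (h1 : θ ≤ 1) (N : ℕ) :
    ∑ k ∈ Finset.range (N + 1), θ ^ k * (1 - θ) ^ (N - k) * (N.choose k : ℝ) / (k + 1)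
      ≤ 1 / ((N + 1) * θ) := by
  have hb := add_pow θ (1 - θ) (N + 1)
  rw [Finset.sum_range_succ'] at hb
  have h2 : ∑ k ∈ Finset.range (N + 1), θ ^ (k + 1) * (1 - θ) ^ (N + 1 - (k + 1)) *
      ((N + 1).choose (k + 1) : ℝ) ≤ 1 := by
    have : 0 ≤ θ ^ 0 * (1 - θ) ^ (N + 1 - 0) * ((N + 1).choose 0 : ℝ) := by
      have : 0 ≤ 1 - θ := by linarith
      positivity
    have h3 : (θ + (1 - θ)) ^ (N + 1) = 1 := by simp
    linarith
  rw [le_div_iff₀ (by positivity)]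
  refine le_trans (le_of_eq ?_) h2
  rw [Finset.sum_mul]
  refine Finset.sum_congr rfl fun k _ => ?_
  have h : ((N : ℝ) + 1) * N.choose k = (N + 1).choose (k + 1) * (k + 1) := by
    exact_mod_cast Nat.add_one_mul_choose_eq N k
  rw [Nat.add_sub_add_right, div_mul_eq_mul_div, div_eq_iff (by positivity)]
  calc _ = θ ^ k * (1 - θ) ^ (N - k) * θ * (((N : ℝ) + 1) * N.choose k) := by ring
    _ = _ := by rw [h]; ring

theorem sum_choose_div_sqrt_le {θ : ℝ} (h0 : 0 < θ) (h1 : θ ≤ 1) {N : ℕ} (hN : 0 < N) :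
    ∑ k ∈ Finset.range (N + 1), θ ^ k * (1 - θ) ^ (N - k) * (N.choose k : ℝ) / √(k + 1)
      ≤ (1 / θ) / √N := by
  have hθ : 0 ≤ 1 - θ := by linarith
  have hN' : (0 : ℝ) < N := by exact_mod_cast hN
  have hs : 0 < √(N : ℝ) := Real.sqrt_pos.2 hN'
  have key : ∀ k : ℕ, 1 / √((k : ℝ) + 1) ≤ (√N / (k + 1) + 1 / √N) / 2 := by
    intro k
    have ht : 0 < √((k : ℝ) + 1) := by positivity
    have ht2 : (k : ℝ) + 1 = √((k : ℝ) + 1) ^ 2 := (Real.sq_sqrt (by positivity)).symm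
    set t := √((k : ℝ) + 1)
    rw [ht2]
    have : (√N / t ^ 2 + 1 / √N) / 2 - 1 / t = (√N - t) ^ 2 / (2 * t ^ 2 * √N) := by
      field_simp
      ring
    have h2 : 0 ≤ (√N - t) ^ 2 / (2 * t ^ 2 * √N) := by positivity
    linarith
  have hb : ∑ k ∈ Finset.range (N + 1), θ ^ k * (1 - θ) ^ (N - k) * (N.choose k : ℝ) = 1 := by
    rw [← add_pow]; simp
  calc _ ≤ ∑ k ∈ Finset.range (N + 1), (√N / 2 *
          (θ ^ k * (1 - θ) ^ (N - k) * (N.choose k : ℝ) / (k + 1)) +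
          1 / (2 * √N) * (θ ^ k * (1 - θ) ^ (N - k) * (N.choose k : ℝ))) := by
        refine Finset.sum_le_sum fun k _ => ?_
        have := mul_le_mul_of_nonneg_left (key k)
          (show 0 ≤ θ ^ k * (1 - θ) ^ (N - k) * (N.choose k : ℝ) by positivity)
        refine le_trans (le_of_eq (by ring)) (this.trans (le_of_eq ?_))
        field_simp
    _ ≤ √N / 2 * (1 / ((N + 1) * θ)) + 1 / (2 * √N) * 1 := by
        rw [Finset.sum_add_distrib, ← Finset.mul_sum, ← Finset.mul_sum, hb]
        gcongr
        exact sum_choose_div_succ_le h0 h1 N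
    _ ≤ √N / 2 * (1 / (N * θ)) + 1 / (2 * √N) * (1 / θ) := by
        gcongr
        · linarith
        · rw [le_div_iff₀ h0]; linarith
    _ = _ := by
        have : (N : ℝ) = √N ^ 2 := (Real.sq_sqrt hN'.le).symm
        field_simp
        rw [← this]; ring

/-- Anti-concentration: a random walk with nondegenerate steps spends at most `O(1/√N)` mass
on any test function that is summable along arithmetic progressions of step `T b - T a`. -/
theorem avgOp_pow_le_div_sqrt {Y : Type*} [Fintype Y] {T w : Y → ℝ} (hw : ∀ y, 0 ≤ w y)
    (hw1 : ∑ y, w y = 1) {a b : Y} (hab : a ≠ b) {θ : ℝ} (hθ : 0 < θ) (ha : θ / 2 ≤ w a)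
    (hb : θ / 2 ≤ w b) {F : ℝ → ℝ} {G : ℝ} (hF0 : ∀ u, 0 ≤ F u)
    (hG : ∀ (c : ℝ) (k : ℕ), ∑ j ∈ Finset.range (k + 1), F (c + j * (T b - T a)) ≤ G)
    {N : ℕ} (hN : 0 < N) (u : ℝ) : (avgOp T w ^ N) F u ≤ G / θ / √N := by
  have hG0 : 0 ≤ G := le_trans (Finset.sum_nonneg fun _ _ => hF0 _) (hG 0 0)
  set c : Y → ℝ := Pi.single b (θ / 2) + Pi.single a (θ / 2) with hc
  set d : Y → ℝ := w - c with hd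
  have hcs : ∑ y, c y = θ := by
    simp [hc, Finset.sum_add_distrib]
  have hd0 : ∀ y, 0 ≤ d y := by
    intro y
    by_cases hya : y = a
    · subst hya
      simp [hd, hc, hab, ha]
    · by_cases hyb : y = b
      · subst hyb
        simp [hd, hc, hya, hb]
      · simp [hd, hc, hya, hyb, hw y]
  have hds : ∑ y, d y = 1 - θ := by
    simp only [hd, Pi.sub_apply, Finset.sum_sub_distrib, hw1, hcs]
  have hθ1 : θ ≤ 1 := by
    have : 0 ≤ ∑ y, d y := Finset.sum_nonneg fun y _ => hd0 y
    linarith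
  have hcop : avgOp T c = (θ / 2) • (shiftOp (T b) + shiftOp (T a)) := by
    refine LinearMap.ext fun F => funext fun u => ?_
    simp [avgOp_apply, hc, add_mul, Finset.sum_add_distrib, Pi.single_apply, shiftOp_apply]
  have hwop : avgOp T w = avgOp T d + avgOp T c := by
    rw [← avgOp_add, hd, sub_add_cancel]
  have hcomm : Commute (avgOp T d) (avgOp T c) := by
    rw [hcop]
    exact (((avgOp_commute_shiftOp T d _).add_right (avgOp_commute_shiftOp T d _))).smul_right _
  have hck : ∀ (k : ℕ) (v : ℝ), (avgOp T c ^ k) F v ≤ θ ^ k * (G / √(k + 1)) := by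
    intro k v
    rw [hcop, smul_pow, LinearMap.smul_apply, Pi.smul_apply, smul_eq_mul]
    have := mul_le_mul_of_nonneg_left (coin_pow_le hF0 hG k v)
      (show 0 ≤ (θ / 2) ^ k by positivity)
    refine this.trans (le_of_eq ?_)
    rw [← mul_assoc, ← mul_pow]
    congr 2
    ring
  rw [hwop, add_comm, hcomm.symm.add_pow, LinearMap.sum_apply, Finset.sum_apply]
  calc _ ≤ ∑ k ∈ Finset.range (N + 1),
          G * (θ ^ k * (1 - θ) ^ (N - k) * (N.choose k : ℝ) / √(k + 1)) := by
        refine Finset.sum_le_sum fun k _ => ?_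
        rw [← nsmul_eq_mul', LinearMap.smul_apply, Pi.smul_apply, nsmul_eq_mul,
          (hcomm.symm.pow_pow k (N - k)).eq, Module.End.mul_apply]
        have h := avgOp_pow_le T hd0 (N - k) (hck k) u
        rw [hds] at h
        refine (mul_le_mul_of_nonneg_left h (Nat.cast_nonneg _)).trans (le_of_eq ?_)
        ring
    _ ≤ G * ((1 / θ) / √N) := by
        rw [← Finset.mul_sum]
        exact mul_le_mul_of_nonneg_left (sum_choose_div_sqrt_le hθ hθ1 hN) hG0
    _ = _ := by ring

theorem exists_sum_exp_neg_abs_le {κ δ : ℝ} (hκ : 0 < κ) (hδ : 0 < δ) :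
    ∃ G : ℝ, ∀ (c : ℝ) (k : ℕ),
      ∑ j ∈ Finset.range (k + 1), Real.exp (-κ * |c + j * δ|) ≤ G := by
  set r := Real.exp (-(κ * δ)) with hr
  have hr0 : 0 < r := Real.exp_pos _
  have hr1 : r < 1 := by rw [hr, Real.exp_lt_one_iff]; nlinarith
  have hsum : Summable fun i : ℤ => r ^ i.natAbs := by
    refine Summable.of_nat_of_neg ?_ ?_ <;>
      simpa using summable_geometric_of_lt_one hr0.le hr1
  refine ⟨Real.exp (κ * δ) * ∑' i : ℤ, r ^ i.natAbs, fun c k => ?_⟩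
  set m : ℤ := ⌊c / δ⌋ with hm
  have hm1 : m * δ ≤ c := by
    have := Int.floor_le (c / δ)
    rwa [le_div_iff₀ hδ] at this
  have hm2 : c ≤ (m + 1) * δ := by
    have := (Int.lt_floor_add_one (c / δ)).le
    rwa [div_le_iff₀ hδ] at this
  have hterm : ∀ j : ℕ, Real.exp (-κ * |c + j * δ|) ≤
      Real.exp (κ * δ) * r ^ ((j : ℤ) + m).natAbs := by
    intro j
    rw [hr, ← Real.exp_nat_mul, ← Real.exp_add, Real.exp_le_exp]
    have h1 : (((((j : ℤ) + m).natAbs : ℕ)) : ℝ) = |(j : ℝ) + m| := by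
      rw [Nat.cast_natAbs]; push_cast; rfl
    rw [h1]
    have h2 : |(j : ℝ) + m| * δ ≤ |c + j * δ| + δ := by
      calc |(j : ℝ) + m| * δ = |((j : ℝ) + m) * δ| := by rw [abs_mul, abs_of_pos hδ]
        _ = |(c + j * δ) + (m * δ - c)| := by congr 1; ring
        _ ≤ |c + j * δ| + |m * δ - c| := abs_add_le _ _
        _ ≤ _ := by
          gcongr
          rw [abs_le]
          constructor <;> nlinarith
    nlinarith
  calc _ ≤ ∑ j ∈ Finset.range (k + 1), Real.exp (κ * δ) * r ^ ((j : ℤ) + m).natAbs :=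
        Finset.sum_le_sum fun j _ => hterm j
    _ = Real.exp (κ * δ) * ∑ j ∈ Finset.range (k + 1), r ^ ((j : ℤ) + m).natAbs := by
        rw [Finset.mul_sum]
    _ ≤ _ := by
        gcongr
        have hinj : Function.Injective fun j : ℕ => (j : ℤ) + m := fun i j h => by
          simpa using h
        refine le_trans (le_of_eq (Finset.sum_map (Finset.range (k + 1))
          ⟨fun j : ℕ => (j : ℤ) + m, hinj⟩ fun i : ℤ => r ^ i.natAbs).symm) ?_
        exact hsum.sum_le_tsum _ fun i _ => by positivity

theorem sum_prod_mul_prod {A ι : Type*} [Fintype A] [Fintype ι] [DecidableEq ι] (P : A → ℝ) (h : ι → A → ℝ) :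
    ∑ c : ι → A, (∏ i, P (c i)) * ∏ i, h i (c i) = ∏ i, ∑ a, P a * h i a := by
  rw [Finset.prod_univ_sum, Fintype.piFinset_univ]
  simp only [Finset.prod_mul_distrib]

section RandomCode
variable {A ι : Type*} [Fintype A] [Fintype ι] [DecidableEq ι] {P : A → ℝ}

theorem sum_prod_eq_one (hP1 : ∑ a, P a = 1) : ∑ c : ι → A, ∏ i, P (c i) = 1 := by
  simpa [hP1] using sum_prod_mul_prod (ι := ι) P fun _ _ => 1

theorem sum_prod_mul_apply (hP1 : ∑ a, P a = 1) (k : ι) (g : A → ℝ) :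
    ∑ c : ι → A, (∏ i, P (c i)) * g (c k) = ∑ a, P a * g a := by
  have h := sum_prod_mul_prod P fun i a => if i = k then g a else 1
  simp only [Finset.prod_ite_eq', Finset.mem_univ, if_true] at h
  rw [h, Finset.prod_eq_single k (fun i _ hi => by simp [hi, hP1]) (by simp)]
  simp

theorem sum_prod_mul_apply_mul_apply (hP1 : ∑ a, P a = 1) {k l : ι} (hkl : k ≠ l)
    (g h : A → ℝ) :
    ∑ c : ι → A, (∏ i, P (c i)) * (g (c k) * h (c l)) =
      (∑ a, P a * g a) * ∑ a, P a * h a := by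
  have H := sum_prod_mul_prod P fun i a =>
    (if i = k then g a else 1) * (if i = l then h a else 1)
  simp only [Finset.prod_mul_distrib, Finset.prod_ite_eq', Finset.mem_univ, if_true] at H
  rw [H, Finset.prod_eq_mul k l hkl
    (fun i _ hi => by simp [hi.1, hi.2, hP1]) (by simp) (by simp)]
  simp [hkl, hkl.symm]

variable {B : Type*} [Fintype B] (V : A → B → ℝ)

/-- The probability that the output of the codeword `c m` is also compatible with another
codeword. -/
noncomputable def confusion (c : ι → A) (m : ι) : ℝ :=
  ∑ b, V (c m) b * (if ∃ k, k ≠ m ∧ 0 < V (c k) b then (1 : ℝ) else 0)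

variable {V}

theorem sum_prod_mul_confusion_le (hP0 : ∀ a, 0 ≤ P a) (hP1 : ∑ a, P a = 1)
    (hV : ∀ a b, 0 ≤ V a b) (m : ι) :
    ∑ c : ι → A, (∏ i, P (c i)) * confusion V c m ≤
      ∑ b, (∑ a, P a * V a b) *
        min 1 (Fintype.card ι * ∑ a, P a * (if 0 < V a b then (1 : ℝ) else 0)) := by
  have hw : ∀ c : ι → A, 0 ≤ ∏ i, P (c i) := fun c => Finset.prod_nonneg fun i _ => hP0 _
  simp only [confusion, Finset.mul_sum (s := (Finset.univ : Finset B))]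
  rw [Finset.sum_comm]
  refine Finset.sum_le_sum fun b _ => ?_
  set q := ∑ a, P a * (if 0 < V a b then (1 : ℝ) else 0) with hq
  have hq0 : 0 ≤ q := Finset.sum_nonneg fun a _ => mul_nonneg (hP0 a) (by split_ifs <;> simp)
  have hp0 : 0 ≤ ∑ a, P a * V a b := Finset.sum_nonneg fun a _ => mul_nonneg (hP0 a) (hV a b)
  rw [mul_min_of_nonneg _ _ hp0]
  refine le_min ?_ ?_
  · rw [mul_one, ← sum_prod_mul_apply hP1 m fun a => V a b]
    refine Finset.sum_le_sum fun c _ => mul_le_mul_of_nonneg_left ?_ (hw c)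
    refine mul_le_of_le_one_right (hV _ _) ?_
    split_ifs <;> simp
  · calc _ ≤ ∑ c : ι → A, ∑ k ∈ Finset.univ.erase m, (∏ i, P (c i)) *
            (V (c m) b * (if 0 < V (c k) b then (1 : ℝ) else 0)) := by
          refine Finset.sum_le_sum fun c _ => ?_
          rw [← Finset.mul_sum, ← Finset.mul_sum]
          refine mul_le_mul_of_nonneg_left (mul_le_mul_of_nonneg_left ?_ (hV _ _)) (hw c)
          have hnn : ∀ k ∈ Finset.univ.erase m, 0 ≤ (if 0 < V (c k) b then (1 : ℝ) else 0) :=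
            fun k _ => by split_ifs <;> simp
          split_ifs with h
          · obtain ⟨k, hkm, hk⟩ := h
            refine le_trans ?_ (Finset.single_le_sum hnn
              (Finset.mem_erase.2 ⟨hkm, Finset.mem_univ k⟩))
            simp [hk]
          · exact Finset.sum_nonneg hnn
      _ = ∑ k ∈ Finset.univ.erase m, (∑ a, P a * V a b) * q := by
          rw [Finset.sum_comm]
          refine Finset.sum_congr rfl fun k hk => ?_
          exact sum_prod_mul_apply_mul_apply hP1 (Finset.ne_of_mem_erase hk).symm
            (fun a => V a b) fun a => if 0 < V a b then (1 : ℝ) else 0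
      _ ≤ _ := by
          rw [Finset.sum_const, nsmul_eq_mul, mul_left_comm]
          refine mul_le_mul_of_nonneg_left (mul_le_mul_of_nonneg_right ?_ hq0) hp0
          exact_mod_cast Finset.card_le_univ _

theorem exists_le_of_sum_mul_le {α : Type*} [Fintype α] {w f : α → ℝ} {t : ℝ}
    (hw : ∀ a, 0 ≤ w a) (hw1 : ∑ a, w a = 1) (h : ∑ a, w a * f a ≤ t) : ∃ a, f a ≤ t := by
  by_contra! hf
  have h1 : ∑ a, w a * (f a - t) ≤ 0 := by
    simp only [mul_sub, Finset.sum_sub_distrib, ← Finset.sum_mul, hw1]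
    linarith
  have h2 : ∀ a ∈ Finset.univ, 0 ≤ w a * (f a - t) := fun a _ =>
    mul_nonneg (hw a) (sub_nonneg.2 (hf a).le)
  have h3 := (Finset.sum_eq_zero_iff_of_nonneg h2).1 (le_antisymm h1 (Finset.sum_nonneg h2))
  have h4 : ∀ a, w a = 0 := fun a => by
    rcases mul_eq_zero.1 (h3 a (Finset.mem_univ a)) with h | h
    · exact h
    · linarith [hf a]
  simp [h4] at hw1

/-- Expurgated random coding: a code whose maximal error probability under unique-compatibility
decoding is at most twice the ensemble average with twice as many codewords. -/
theorem exists_code_le (hP0 : ∀ a, 0 ≤ P a) (hP1 : ∑ a, P a = 1)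
    (hV : ∀ a b, 0 ≤ V a b) {M : ℕ} (hM : 0 < M) :
    ∃ (f : Fin M → A) (φ : B → Fin M), ∀ m : Fin M,
      ∑ b, V (f m) b * (if φ b ≠ m then (1 : ℝ) else 0) ≤
        2 * ∑ b, (∑ a, P a * V a b) *
          min 1 (2 * M * ∑ a, P a * (if 0 < V a b then (1 : ℝ) else 0)) := by
  set ε := ∑ b, (∑ a, P a * V a b) *
          min 1 (2 * M * ∑ a, P a * (if 0 < V a b then (1 : ℝ) else 0)) with hε
  have hε0 : 0 ≤ ε := by
    refine Finset.sum_nonneg fun b _ => mul_nonneg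
      (Finset.sum_nonneg fun a _ => mul_nonneg (hP0 a) (hV a b)) (le_min zero_le_one ?_)
    refine mul_nonneg (by positivity) (Finset.sum_nonneg fun a _ => mul_nonneg (hP0 a) ?_)
    split_ifs <;> simp
  obtain ⟨c, hc⟩ : ∃ c : Fin (2 * M) → A, ∑ m, confusion V c m ≤ 2 * M * ε := by
    refine exists_le_of_sum_mul_le (w := fun c : Fin (2 * M) → A => ∏ i, P (c i))
      (f := fun c => ∑ m, confusion V c m)
      (fun c => Finset.prod_nonneg fun i _ => hP0 _) (sum_prod_eq_one hP1) ?_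
    simp only [Finset.mul_sum]
    rw [Finset.sum_comm]
    refine (Finset.sum_le_sum fun m _ => sum_prod_mul_confusion_le hP0 hP1 hV m).trans ?_
    simp [hε]
  have hconf : ∀ m, 0 ≤ confusion V c m := fun m =>
    Finset.sum_nonneg fun b _ => mul_nonneg (hV _ _) (by split_ifs <;> simp)
  set good : Finset (Fin (2 * M)) := Finset.univ.filter fun m => confusion V c m ≤ 2 * ε with hg
  have hcard : M ≤ good.card := by
    by_contra! hlt
    have hadd := Finset.card_filter_add_card_filter_not (s := Finset.univ)
      fun m => confusion V c m ≤ 2 * ε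
    rw [← hg, Finset.card_univ, Fintype.card_fin] at hadd
    set bad := Finset.univ.filter fun m => ¬ confusion V c m ≤ 2 * ε with hb
    have hbM : M + 1 ≤ bad.card := by omega
    have hne : bad.Nonempty := Finset.card_pos.1 (by omega)
    have h1 : bad.card * (2 * ε) < ∑ m ∈ bad, confusion V c m := by
      rw [← nsmul_eq_mul, ← Finset.sum_const]
      refine Finset.sum_lt_sum_of_nonempty hne fun m hm => ?_
      simpa [hb] using hm
    have h2 : ∑ m ∈ bad, confusion V c m ≤ ∑ m, confusion V c m :=
      Finset.sum_le_sum_of_subset_of_nonneg (Finset.subset_univ _) fun m _ _ => hconf m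
    have h3 : ((M : ℝ) + 1) * (2 * ε) ≤ bad.card * (2 * ε) := by
      gcongr
      exact_mod_cast hbM
    nlinarith
  set e := good.orderEmbOfCardLe hcard
  have : Nonempty (Fin M) := ⟨⟨0, hM⟩⟩
  refine ⟨fun m => c (e m), fun b => Classical.epsilon fun m => 0 < V (c (e m)) b, fun m => ?_⟩
  have hem : confusion V c (e m) ≤ 2 * ε := by
    simpa [hg] using Finset.orderEmbOfCardLe_mem good hcard m
  refine le_trans (Finset.sum_le_sum fun b _ => ?_) hem
  rcases (hV (c (e m)) b).eq_or_lt with h0 | h0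
  · simp [← h0]
  · refine mul_le_mul_of_nonneg_left ?_ (hV _ _)
    have hsp := Classical.epsilon_spec (p := fun m => 0 < V (c (e m)) b) ⟨m, h0⟩
    by_cases hne : (Classical.epsilon fun m => 0 < V (c (e m)) b) = m
    · simp only [hne, ne_eq, not_true_eq_false, if_false]
      split_ifs <;> simp
    · rw [if_pos hne, if_pos ⟨_, e.injective.ne hne, hsp⟩]

end RandomCode

section Singular
variable {X Y : Type*} [Fintype X] (W : X → Y → ℝ) (Q : X → ℝ)

/-- The output distribution of the channel `W` with input distribution `Q`. -/
noncomputable def outProb (y : Y) : ℝ := ∑ x, Q x * W x y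

/-- The `Q`-probability of the set of inputs compatible with the output `y`. -/
noncomputable def compatProb (y : Y) : ℝ := ∑ x, Q x * (if 0 < W x y then (1 : ℝ) else 0)

/-- The information density of a singular pair, as a function of the output. -/
noncomputable def infoDensity (y : Y) : ℝ := -Real.log (compatProb W Q y)

variable {W Q}

theorem compatProb_nonneg (hQ : IsDist Q) (y : Y) : 0 ≤ compatProb W Q y :=
  Finset.sum_nonneg fun x _ => mul_nonneg (hQ.1 x) (by split_ifs <;> simp)

theorem sum_mul_rpow_eq {w : ℝ} {y : Y} (hw : 0 < w)
    (h : ∀ x, Q x = 0 ∨ W x y = 0 ∨ W x y = w) {s : ℝ} (hs : 0 < s) :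
    ∑ x, Q x * W x y ^ s = w ^ s * compatProb W Q y := by
  rw [compatProb, Finset.mul_sum]
  refine Finset.sum_congr rfl fun x _ => ?_
  rcases h x with h | h | h
  · simp [h]
  · simp [h, Real.zero_rpow hs.ne']
  · simp [h, hw, mul_comm]

theorem outProb_eq {w : ℝ} {y : Y} (hw : 0 < w)
    (h : ∀ x, Q x = 0 ∨ W x y = 0 ∨ W x y = w) : outProb W Q y = w * compatProb W Q y := by
  simpa [outProb] using sum_mul_rpow_eq hw h one_pos

theorem sum_prod_mul_Wn {N : ℕ} (y : Fin N → Y) :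
    ∑ x : Fin N → X, (∏ i, Q (x i)) * Wn W x y = ∏ i, outProb W Q (y i) :=
  sum_prod_mul_prod Q fun i x => W x (y i)

variable [Fintype Y]

/-- The moment generating function of minus the information density. -/
noncomputable def infoMgf (W : X → Y → ℝ) (Q : X → ℝ) (ρ : ℝ) : ℝ :=
  ∑ y, outProb W Q y * Real.exp (-ρ * infoDensity W Q y)

theorem outProb_nonneg (hW : IsChannel W) (hQ : IsDist Q) (y : Y) : 0 ≤ outProb W Q y :=
  Finset.sum_nonneg fun x _ => mul_nonneg (hQ.1 x) (hW.1 x y)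

theorem sum_outProb (hW : IsChannel W) (hQ : IsDist Q) : ∑ y, outProb W Q y = 1 := by
  simp only [outProb]
  rw [Finset.sum_comm]
  simp [← Finset.mul_sum, hW.2, hQ.2]

theorem mul_eq_zero_of_outProb_eq_zero (hW : IsChannel W) (hQ : IsDist Q) {y : Y}
    (h : outProb W Q y = 0) (x : X) : Q x * W x y = 0 :=
  (Finset.sum_eq_zero_iff_of_nonneg fun x _ => mul_nonneg (hQ.1 x) (hW.1 x y)).1 h x
    (Finset.mem_univ x)

theorem exists_common_likelihood (hW : IsChannel W) (hQ : IsDist Q) (hs : Singular W Q) {y : Y}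
    (h : 0 < outProb W Q y) :
    ∃ w : ℝ, 0 < w ∧ ∀ x, Q x = 0 ∨ W x y = 0 ∨ W x y = w := by
  obtain ⟨x₀, -, hx₀⟩ : ∃ x ∈ Finset.univ, 0 < Q x * W x y := by
    by_contra! hle
    exact absurd (Finset.sum_nonpos hle) (not_le.2 h)
  refine ⟨W x₀ y, pos_of_mul_pos_right hx₀ (hQ.1 _), fun x => ?_⟩
  by_cases hx : Q x * W x y = 0
  · rcases mul_eq_zero.1 hx with h | h
    · exact Or.inl h
    · exact Or.inr (Or.inl h)
  · have : 0 < Q x * W x y := lt_of_le_of_ne (mul_nonneg (hQ.1 x) (hW.1 x y)) (Ne.symm hx)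
    exact Or.inr (Or.inr (hs x y x₀ (mul_pos this hx₀)))

theorem compatProb_pos (hW : IsChannel W) (hQ : IsDist Q) (hs : Singular W Q) {y : Y}
    (h : 0 < outProb W Q y) : 0 < compatProb W Q y := by
  obtain ⟨w, hw, hx⟩ := exists_common_likelihood hW hQ hs h
  rw [outProb_eq hw hx] at h
  exact pos_of_mul_pos_right h hw.le

theorem Eo_eq_neg_log_infoMgf (hW : IsChannel W) (hQ : IsDist Q) (hs : Singular W Q) {ρ : ℝ}
    (hρ : -1 < ρ) : Eo W ρ Q = -Real.log (infoMgf W Q ρ) := by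
  have h1 : 0 < 1 + ρ := by linarith
  have h1' : 0 < 1 / (1 + ρ) := by positivity
  rw [Eo, infoMgf]
  congr 2
  refine Finset.sum_congr rfl fun y _ => ?_
  rcases (outProb_nonneg hW hQ y).eq_or_lt with h0 | h0
  · rw [← h0, zero_mul, Finset.sum_eq_zero, Real.zero_rpow h1.ne']
    intro x _
    rcases mul_eq_zero.1 (mul_eq_zero_of_outProb_eq_zero hW hQ h0.symm x) with h | h
    · simp [h]
    · simp [h, Real.zero_rpow (inv_pos.2 h1).ne']
  · obtain ⟨w, hw, hx⟩ := exists_common_likelihood hW hQ hs h0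
    have hq := compatProb_pos hW hQ hs h0
    rw [sum_mul_rpow_eq hw hx h1', outProb_eq hw hx,
      Real.mul_rpow (by positivity) hq.le, ← Real.rpow_mul hw.le, one_div,
      inv_mul_cancel₀ h1.ne', Real.rpow_one, Real.rpow_add hq, Real.rpow_one,
      Real.rpow_def_of_pos hq ρ, infoDensity, mul_assoc]
    congr 3
    ring

theorem MI_eq_sum_infoDensity (hW : IsChannel W) (hQ : IsDist Q) (hs : Singular W Q) :
    MI W Q = ∑ y, outProb W Q y * infoDensity W Q y := by
  rw [MI, Finset.sum_comm]
  refine Finset.sum_congr rfl fun y _ => ?_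
  nth_rewrite 1 [outProb]
  rw [Finset.sum_mul]
  refine Finset.sum_congr rfl fun x _ => ?_
  rcases (outProb_nonneg hW hQ y).eq_or_lt with h0 | h0
  · simp [mul_eq_zero_of_outProb_eq_zero hW hQ h0.symm x]
  · obtain ⟨w, hw, hx⟩ := exists_common_likelihood hW hQ hs h0
    rcases hx x with h | h | h
    · simp [h]
    · simp [h]
    · have hp := outProb_eq hw hx
      rw [outProb] at hp
      rw [hp, h, infoDensity, div_mul_eq_div_div, div_self hw.ne', one_div, Real.log_inv]

theorem infoMgf_pos (hW : IsChannel W) (hQ : IsDist Q) (ρ : ℝ) : 0 < infoMgf W Q ρ := by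
  have hnn : ∀ y ∈ Finset.univ, 0 ≤ outProb W Q y * Real.exp (-ρ * infoDensity W Q y) :=
    fun y _ => mul_nonneg (outProb_nonneg hW hQ y) (Real.exp_pos _).le
  refine lt_of_le_of_ne (Finset.sum_nonneg hnn) fun h => ?_
  have h1 := (Finset.sum_eq_zero_iff_of_nonneg hnn).1 h.symm
  have h2 : ∀ y, outProb W Q y = 0 := fun y => by
    simpa [(Real.exp_pos _).ne'] using h1 y (Finset.mem_univ y)
  have h3 := sum_outProb hW hQ
  simp [h2] at h3

theorem hasDerivAt_neg_log_infoMgf (hW : IsChannel W) (hQ : IsDist Q) (ρ : ℝ) :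
    HasDerivAt (fun ρ => -Real.log (infoMgf W Q ρ))
      ((∑ y, outProb W Q y * infoDensity W Q y * Real.exp (-ρ * infoDensity W Q y)) /
        infoMgf W Q ρ) ρ := by
  have h : HasDerivAt (infoMgf W Q) (-∑ y, outProb W Q y * infoDensity W Q y *
      Real.exp (-ρ * infoDensity W Q y)) ρ := by
    rw [← Finset.sum_neg_distrib]
    refine HasDerivAt.fun_sum fun y _ => ?_
    have := (((hasDerivAt_id ρ).neg.mul_const (infoDensity W Q y)).exp).const_mul (outProb W Q y)
    refine this.congr_deriv ?_
    simp
    ring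
  refine ((h.log (infoMgf_pos hW hQ ρ).ne').neg).congr_deriv ?_
  ring

theorem hasDerivAt_neg_log_infoMgf_zero (hW : IsChannel W) (hQ : IsDist Q)
    (hs : Singular W Q) :
    HasDerivAt (fun ρ => -Real.log (infoMgf W Q ρ)) (MI W Q) 0 := by
  refine (hasDerivAt_neg_log_infoMgf hW hQ 0).congr_deriv ?_
  simp [MI_eq_sum_infoDensity hW hQ hs, infoMgf, sum_outProb hW hQ]

theorem hasDerivAt_neg_log_infoMgf_one (hW : IsChannel W) (hQ : IsDist Q)
    (hs : Singular W Q) :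
    HasDerivAt (fun ρ => -Real.log (infoMgf W Q ρ)) (RcrQ W Q) 1 := by
  have h : (fun ρ => Eo W ρ Q) =ᶠ[nhds 1] fun ρ => -Real.log (infoMgf W Q ρ) := by
    filter_upwards [lt_mem_nhds (show (-1 : ℝ) < 1 by norm_num)] with ρ hρ
    exact Eo_eq_neg_log_infoMgf hW hQ hs hρ
  rw [RcrQ, h.deriv_eq]
  exact (hasDerivAt_neg_log_infoMgf hW hQ 1).differentiableAt.hasDerivAt

theorem exists_infoDensity_lt (hW : IsChannel W) (hQ : IsDist Q) (hs : Singular W Q)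
    (hlt : RcrQ W Q < MI W Q) :
    ∃ a b, 0 < outProb W Q a ∧ 0 < outProb W Q b ∧ infoDensity W Q a < infoDensity W Q b := by
  by_contra! hcon
  obtain ⟨a, ha⟩ : ∃ a, 0 < outProb W Q a := by
    by_contra! hle
    have h1 := Finset.sum_nonpos fun y (_ : y ∈ Finset.univ) => hle y
    rw [sum_outProb hW hQ] at h1
    linarith
  have hconst : ∀ y, outProb W Q y = 0 ∨ infoDensity W Q y = infoDensity W Q a := fun y => by
    rcases (outProb_nonneg hW hQ y).eq_or_lt with h | h
    · exact Or.inl h.symm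
    · exact Or.inr (le_antisymm (hcon a y ha h) (hcon y a h ha))
  have h1 : MI W Q = infoDensity W Q a := by
    rw [MI_eq_sum_infoDensity hW hQ hs, ← one_mul (infoDensity W Q a), ← sum_outProb hW hQ,
      Finset.sum_mul]
    refine Finset.sum_congr rfl fun y _ => ?_
    rcases hconst y with h | h <;> simp [h]
  have h2 : RcrQ W Q = infoDensity W Q a := by
    rw [(hasDerivAt_neg_log_infoMgf_one hW hQ hs).unique (hasDerivAt_neg_log_infoMgf hW hQ 1),
      div_eq_iff (infoMgf_pos hW hQ 1).ne', infoMgf, Finset.mul_sum]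
    refine Finset.sum_congr rfl fun y _ => ?_
    rcases hconst y with h | h
    · simp [h]
    · rw [h]; ring
  linarith

theorem exists_optimal_tilt (hW : IsChannel W) (hQ : IsDist Q) (hs : Singular W Q) {R : ℝ}
    (hR1 : RcrQ W Q < R) (hR2 : R < MI W Q) :
    ∃ ρ, 0 < ρ ∧ ρ < 1 ∧ ErQ W R Q = -ρ * R - Real.log (infoMgf W Q ρ) := by
  set J : ℝ → ℝ := fun ρ => -Real.log (infoMgf W Q ρ) with hJ
  set g : ℝ → ℝ := fun ρ => -ρ * R + J ρ with hg
  have hgd : ∀ {ρ j : ℝ}, HasDerivAt J j ρ → HasDerivAt g (-R + j) ρ := fun {ρ j} h =>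
    (((hasDerivAt_id ρ).neg.mul_const R).add h).congr_deriv (by ring)
  have hcont : ContinuousOn g (Set.Icc 0 1) := fun ρ _ =>
    (hgd (hasDerivAt_neg_log_infoMgf hW hQ ρ)).continuousAt.continuousWithinAt
  obtain ⟨ρ, hρ, hmax⟩ := isCompact_Icc.exists_isMaxOn (Set.nonempty_Icc.2 zero_le_one) hcont
  have hmem : ∀ {x y : ℝ}, x ∈ Set.Icc (0 : ℝ) 1 → y ∈ Set.Icc (0 : ℝ) 1 →
      y - x ∈ posTangentConeAt (Set.Icc 0 1) x := fun hx hy =>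
    sub_mem_posTangentConeAt_of_segment_subset ((convex_Icc 0 1).segment_subset hx hy)
  have h0 : ρ ≠ 0 := by
    rintro rfl
    have := hmax.localize.hasFDerivWithinAt_nonpos
      (hgd (hasDerivAt_neg_log_infoMgf_zero hW hQ hs)).hasFDerivAt.hasFDerivWithinAt
      (hmem hρ (Set.right_mem_Icc.2 zero_le_one))
    simp at this
    linarith
  have h1 : ρ ≠ 1 := by
    rintro rfl
    have := hmax.localize.hasFDerivWithinAt_nonpos
      (hgd (hasDerivAt_neg_log_infoMgf_one hW hQ hs)).hasFDerivAt.hasFDerivWithinAt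
      (hmem hρ (Set.left_mem_Icc.2 zero_le_one))
    simp at this
    linarith
  refine ⟨ρ, lt_of_le_of_ne hρ.1 h0.symm, lt_of_le_of_ne hρ.2 h1, ?_⟩
  have himg : (fun ρ => -ρ * R + Eo W ρ Q) '' Set.Icc (0 : ℝ) 1 = g '' Set.Icc 0 1 := by
    refine Set.image_congr fun r hr => ?_
    rw [Eo_eq_neg_log_infoMgf hW hQ hs (by linarith [hr.1])]
  have hgr : IsGreatest (g '' Set.Icc 0 1) (g ρ) :=
    ⟨Set.mem_image_of_mem g hρ, by rintro _ ⟨r, hr, rfl⟩; exact hmax hr⟩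
  rw [ErQ, himg, hgr.csSup_eq]
  simp only [hg, hJ]
  ring

theorem min_one_exp_le {ρ κ : ℝ} (h1 : κ ≤ ρ) (h2 : κ ≤ 1 - ρ) (v : ℝ) :
    min 1 (Real.exp v) ≤ Real.exp (ρ * v) * Real.exp (-κ * |v|) := by
  rw [← Real.exp_add]
  rcases le_total 0 v with hv | hv
  · refine (min_le_left _ _).trans (Real.one_le_exp ?_)
    rw [abs_of_nonneg hv]
    nlinarith
  · refine (min_le_right _ _).trans (Real.exp_le_exp.2 ?_)
    rw [abs_of_nonpos hv]
    nlinarith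

theorem sum_prod_outProb_mul_min_le (hW : IsChannel W) (hQ : IsDist Q) (hs : Singular W Q)
    {R : ℝ} (hR1 : RcrQ W Q < R) (hR2 : R < MI W Q) :
    ∃ K, ∀ N : ℕ, 0 < N →
      ∑ y : Fin N → Y, (∏ i, outProb W Q (y i)) *
          min 1 (Real.exp (N * R) * ∏ i, compatProb W Q (y i)) ≤
        K / √N * Real.exp (-(N : ℝ) * ErQ W R Q) := by
  obtain ⟨ρ, hρ0, hρ1, hEr⟩ := exists_optimal_tilt hW hQ hs hR1 hR2
  obtain ⟨a, b, ha, hb, hab⟩ := exists_infoDensity_lt hW hQ hs (hR1.trans hR2)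
  set T := infoDensity W Q with hT
  set Φ := infoMgf W Q ρ with hΦ
  have hΦ0 : 0 < Φ := infoMgf_pos hW hQ ρ
  set w : Y → ℝ := fun y => outProb W Q y * Real.exp (-ρ * T y) / Φ with hw
  have hw0 : ∀ y, 0 ≤ w y := fun y =>
    div_nonneg (mul_nonneg (outProb_nonneg hW hQ y) (Real.exp_pos _).le) hΦ0.le
  have hw1 : ∑ y, w y = 1 := by
    rw [← Finset.sum_div]
    exact div_self hΦ0.ne'
  have hwa : 0 < w a := by simp only [hw]; positivity
  have hwb : 0 < w b := by simp only [hw]; positivity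
  set κ := min ρ (1 - ρ) with hκ
  have hκ0 : 0 < κ := lt_min hρ0 (by linarith)
  obtain ⟨G, hG⟩ := exists_sum_exp_neg_abs_le hκ0 (sub_pos.2 hab)
  set θ := min (w a) (w b) with hθ
  have hθ0 : 0 < θ := lt_min hwa hwb
  refine ⟨G / θ, fun N hN => ?_⟩
  have hne : a ≠ b := fun h => by simp [h] at hab
  have key := avgOp_pow_le_div_sqrt hw0 hw1 hne hθ0
    ((half_le_self hθ0.le).trans (min_le_left _ _)) ((half_le_self hθ0.le).trans (min_le_right _ _))
    (F := fun u => Real.exp (-κ * |u|)) (fun u => (Real.exp_pos _).le) hG hN (-(N * R))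
  rw [avgOp_pow_apply] at key
  have hexp : Real.exp (-(N : ℝ) * ErQ W R Q) = Real.exp (ρ * (N * R)) * Φ ^ N := by
    rw [hEr, ← Real.exp_log (pow_pos hΦ0 N), ← Real.exp_add, Real.log_pow]
    congr 1
    ring
  rw [hexp, mul_comm (G / θ / √N)]
  refine le_trans ?_ (mul_le_mul_of_nonneg_left key (by positivity))
  rw [Finset.mul_sum]
  refine Finset.sum_le_sum fun y _ => ?_
  have hp0 : 0 ≤ ∏ i, outProb W Q (y i) := Finset.prod_nonneg fun i _ => outProb_nonneg hW hQ _
  have hwprod : Φ ^ N * ∏ i, w (y i) =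
      (∏ i, outProb W Q (y i)) * Real.exp (-ρ * ∑ i, T (y i)) := by
    simp only [hw, Finset.prod_div_distrib, Finset.prod_mul_distrib, Finset.mul_sum,
      Real.exp_sum, Finset.prod_const, Finset.card_univ, Fintype.card_fin]
    field_simp
  have hrhs : Real.exp (ρ * (N * R)) * Φ ^ N *
      ((∏ i, w (y i)) * Real.exp (-κ * |-(N * R) + ∑ i, T (y i)|)) =
      (∏ i, outProb W Q (y i)) * (Real.exp (ρ * (N * R - ∑ i, T (y i))) *
        Real.exp (-κ * |N * R - ∑ i, T (y i)|)) := by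
    calc _ = Real.exp (ρ * (N * R)) * (Φ ^ N * ∏ i, w (y i)) *
          Real.exp (-κ * |-(N * R) + ∑ i, T (y i)|) := by ring
      _ = _ := by
        rw [hwprod, mul_sub, sub_eq_add_neg, Real.exp_add,
          show -(N * R) + ∑ i, T (y i) = -(N * R - ∑ i, T (y i)) by ring, abs_neg,
          neg_mul ρ (∑ i, T (y i))]
        ring
  rw [hrhs]
  rcases hp0.eq_or_lt with h | h
  · simp [← h]
  · refine mul_le_mul_of_nonneg_left ?_ hp0
    refine le_trans (le_of_eq ?_) (min_one_exp_le (min_le_left _ _) (min_le_right _ _) _)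
    rw [sub_eq_add_neg, Real.exp_add, ← Finset.sum_neg_distrib, Real.exp_sum]
    congr 2
    refine Finset.prod_congr rfl fun i _ => ?_
    have hi : 0 < outProb W Q (y i) :=
      lt_of_le_of_ne (outProb_nonneg hW hQ _)
        (Finset.prod_ne_zero_iff.1 h.ne' i (Finset.mem_univ i)).symm
    simp [hT, infoDensity, Real.exp_log (compatProb_pos hW hQ hs hi)]

theorem sum_prod_mul_Wn_pos (hW : IsChannel W) {N : ℕ} (y : Fin N → Y) :
    ∑ x : Fin N → X, (∏ i, Q (x i)) * (if 0 < Wn W x y then (1 : ℝ) else 0) =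
      ∏ i, compatProb W Q (y i) := by
  refine Eq.trans ?_ (sum_prod_mul_prod Q fun i x => if 0 < W x (y i) then (1 : ℝ) else 0)
  refine Finset.sum_congr rfl fun x _ => ?_
  congr 1
  by_cases h : ∀ i, 0 < W (x i) (y i)
  · rw [Wn, if_pos (Finset.prod_pos fun i _ => h i), Finset.prod_eq_one fun i _ => if_pos (h i)]
  · push Not at h
    obtain ⟨i, hi⟩ := h
    have hi0 : W (x i) (y i) = 0 := le_antisymm hi (hW.1 _ _)
    rw [Wn, Finset.prod_eq_zero (Finset.mem_univ i) hi0,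
      Finset.prod_eq_zero (Finset.mem_univ i) (if_neg (not_lt.2 hi))]
    simp

end Singular

/-- Refined random coding bound, singular case: existence of an `(N,R)` code
with maximal error probability at most `K̃₁ / √N · exp(-N E_r(R,Q))`. -/
theorem statement1 {X Y : Type*} [Fintype X] [Fintype Y] [Nonempty X] [Nonempty Y]
    (W : X → Y → ℝ) (hW : IsChannel W) (hcr : Rcr W < Capacity W)
    (Q : X → ℝ) (hQ : IsDist Q) (R : ℝ) (hR : 0 < R)
    (hsing : Singular W Q) (hR1 : RcrQ W Q < R) (hR2 : R < MI W Q) :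
    ∃ K : ℝ, 0 < K ∧ ∀ N : ℕ, 0 < N →
      ∃ (f : Fin (nMsgs N R) → Fin N → X) (φ : (Fin N → Y) → Fin (nMsgs N R)),
        Pmax W f φ ≤ K / Real.sqrt N * Real.exp (-(N : ℝ) * ErQ W R Q) := by
  obtain ⟨K, hK⟩ := sum_prod_outProb_mul_min_le hW hQ hsing hR1 hR2
  refine ⟨max 1 (8 * K), by positivity, fun N hN => ?_⟩
  set M := nMsgs N R with hM
  have hM0 : 0 < M := Nat.ceil_pos.2 (Real.exp_pos _)
  obtain ⟨f, φ, hfφ⟩ := exists_code_le (P := fun x : Fin N → X => ∏ i, Q (x i))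
    (V := fun x y => Wn W x y) (fun x => Finset.prod_nonneg fun i _ => hQ.1 _)
    (sum_prod_eq_one hQ.2) (fun x y => Finset.prod_nonneg fun i _ => hW.1 _ _) hM0
  have : Nonempty (Fin M) := ⟨⟨0, hM0⟩⟩
  refine ⟨f, φ, ciSup_le fun m => (hfφ m).trans ?_⟩
  simp only [sum_prod_mul_Wn, sum_prod_mul_Wn_pos hW]
  have hMle : 2 * (M : ℝ) ≤ 4 * Real.exp (N * R) := by
    have h1 : (M : ℝ) < Real.exp (N * R) + 1 := Nat.ceil_lt_add_one (Real.exp_pos _).le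
    have h2 : 1 ≤ Real.exp (N * R) := Real.one_le_exp (by positivity)
    linarith
  calc _ ≤ 2 * ∑ y : Fin N → Y, 4 * ((∏ i, outProb W Q (y i)) *
          min 1 (Real.exp (N * R) * ∏ i, compatProb W Q (y i))) := by
        refine mul_le_mul_of_nonneg_left (Finset.sum_le_sum fun y _ => ?_) zero_le_two
        rw [mul_left_comm, mul_min_of_nonneg _ _ (by norm_num : (0 : ℝ) ≤ 4), ← mul_assoc 4]
        refine mul_le_mul_of_nonneg_left (min_le_min (by norm_num) ?_)
          (Finset.prod_nonneg fun i _ => outProb_nonneg hW hQ _)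
        exact mul_le_mul_of_nonneg_right hMle
          (Finset.prod_nonneg fun i _ => compatProb_nonneg hQ _)
    _ = 8 * ∑ y : Fin N → Y, (∏ i, outProb W Q (y i)) *
          min 1 (Real.exp (N * R) * ∏ i, compatProb W Q (y i)) := by
        rw [← Finset.mul_sum]; ring
    _ ≤ 8 * (K / √N * Real.exp (-(N : ℝ) * ErQ W R Q)) := by gcongr; exact hK N hN
    _ = (8 * K) / √N * Real.exp (-(N : ℝ) * ErQ W R Q) := by ring
    _ ≤ _ := by
        gcongr
        exact le_max_right _ _

end RCB
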